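/- arXiv:2311.07728 — 2 statements merged into one kernel-verified Lean document; each statement's English description precedes it below -/
import Mathlib

section
/- Let h : S¹ → S¹ be a homeomorphism of the circle S¹ = ℝ/ℤ, and let I₁, I₂, I₃ be pairwise disjoint closed subsets of S¹, each having nonempty interior and each equal to the closure of its interior. Suppose that for each j ∈ {1,2,3} there is a point a_j ∈ I_j such that hⁿ(ξ) → a_j as n → +∞ for every ξ in the interior of I_j. Let X = {(x,y,z) ∈ (S¹)³ : x, y, z pairwise distinct}, and let V be a finite-dimensional linear subspace of the space of bounded continuous real-valued functions on X such that f ∘ (h×h×h) ∈ V for every f ∈ V. Then every f ∈ V is constant on I₁ × I₂ × I₃ (which is contained in X since the I_j are pairwise disjoint). (This is Lemma 3.3, 'constant on affected regions', stated in terms of circle dynamics: for an earthquake along a simple closed geodesic the boundaries at infinity of three distinct affected regions play the role of I₁, I₂, I₃, with a_j the attracting fixed point.) -/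
open Filter Topology

/-- The set of pairwise distinct triples of points of the circle. -/
def distinctTriples : Set (UnitAddCircle × UnitAddCircle × UnitAddCircle) :=
  {p | p.1 ≠ p.2.1 ∧ p.1 ≠ p.2.2 ∧ p.2.1 ≠ p.2.2}

/-- A homeomorphism `h` of the circle induces a continuous self-map `h × h × h`
of the space of pairwise distinct triples. -/
noncomputable def tripleMap (h : UnitAddCircle ≃ₜ UnitAddCircle) :
    C(↥distinctTriples, ↥distinctTriples) where
  toFun p := ⟨(h p.1.1, h p.1.2.1, h p.1.2.2),
    ⟨fun e => p.2.1 (h.injective e), fun e => p.2.2.1 (h.injective e),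
      fun e => p.2.2.2 (h.injective e)⟩⟩
  continuous_toFun := by
    apply Continuous.subtype_mk
    fun_prop

/-!
For surjective `T`, the map `f ↦ f ∘ T` is an isometry of the space of bounded continuous
functions. An orbit of it inside a finite-dimensional subspace is totally bounded, and under an
isometry a point with totally bounded orbit is recurrent: `f` is a cluster point of the
functions `f ∘ T^[n]`. Evaluating at a point `p` with `T^[n] p → A` gives `f p = f A`, and by
continuity this persists on the closure of the set of such points. For `T = h × h × h` and
`A = (a₁, a₂, a₃)`, that closure contains `I₁ × I₂ × I₃`.
-/

open scoped BoundedContinuousFunction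

/-- The basin of attraction of `a` under `T`: the points whose forward orbit converges to `a`.
Neither that `a` is fixed nor that the basin is a neighbourhood of `a` is required. -/
def basinOfAttraction {X : Type*} [TopologicalSpace X] (T : X → X) (a : X) : Set X :=
  {x | Tendsto (fun n : ℕ => T^[n] x) atTop (𝓝 a)}

theorem disjoint_basinOfAttraction {X : Type*} [TopologicalSpace X] [T2Space X] (T : X → X)
    {a b : X} (hab : a ≠ b) : Disjoint (basinOfAttraction T a) (basinOfAttraction T b) :=
  Set.disjoint_left.2 fun _ ha hb => hab (tendsto_nhds_unique ha hb)

theorem isometry_iterate {M : Type*} [PseudoEMetricSpace M] {T : M → M} (hT : Isometry T) :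
    ∀ n : ℕ, Isometry T^[n]
  | 0 => isometry_id
  | n + 1 => (isometry_iterate hT n).comp hT

theorem mapClusterPt_iterate_of_isometry {M : Type*} [PseudoMetricSpace M] {T : M → M}
    (hT : Isometry T) {x : M} (hx : TotallyBounded (Set.range fun n : ℕ => T^[n] x)) :
    MapClusterPt x atTop (fun n : ℕ => T^[n] x) := by
  rw [Metric.nhds_basis_ball.mapClusterPt_iff_frequently]
  intro ε hε
  rw [frequently_atTop]
  intro N
  have hcauchy : Cauchy (((hyperfilter ℕ).map fun n => T^[n] x : Ultrafilter M) : Filter M) :=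
    totallyBounded_iff_ultrafilter.1 hx _ (by simp)
  obtain ⟨t, ht, hdist⟩ := (Metric.cauchy_iff.1 hcauchy).2 ε hε
  have hvisit : ∀ᶠ n in (hyperfilter ℕ : Filter ℕ), T^[n] x ∈ t := ht
  have hfreq : ∃ᶠ n in atTop, T^[n] x ∈ t :=
    hvisit.frequently.filter_mono Nat.hyperfilter_le_atTop
  obtain ⟨m, -, hm⟩ := frequently_atTop.1 hfreq 0
  obtain ⟨n, hmn, hn⟩ := frequently_atTop.1 hfreq (N + m)
  obtain ⟨k, rfl⟩ := Nat.exists_eq_add_of_le' hmn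
  refine ⟨k + N, Nat.le_add_left N k, ?_⟩
  -- Two visits to a set of diameter less than `ε`, at times `m` and `m + k + N`, are pulled back
  -- along the isometry `T^[m]`.
  calc dist (T^[k + N] x) x = dist (T^[m] (T^[k + N] x)) (T^[m] x) :=
        ((isometry_iterate hT m).dist_eq _ _).symm
    _ = dist (T^[k + (N + m)] x) (T^[m] x) := by
        rw [← Function.iterate_add_apply, add_comm m, add_assoc]
    _ < ε := hdist _ hn _ hm

theorem totallyBounded_inter_closedBall_of_finiteDimensional {𝕜 E : Type*}
    [NontriviallyNormedField 𝕜] [LocallyCompactSpace 𝕜] [NormedAddCommGroup E]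
    [NormedSpace 𝕜 E] (V : Submodule 𝕜 E) [FiniteDimensional 𝕜 V] (r : ℝ) :
    TotallyBounded ((V : Set E) ∩ Metric.closedBall 0 r) := by
  have : ProperSpace V := FiniteDimensional.proper 𝕜 V
  have hball : ((↑) : V → E) '' Metric.closedBall 0 r = (V : Set E) ∩ Metric.closedBall 0 r := by
    ext x
    simp [and_comm]
  exact hball ▸ ((isCompact_closedBall (0 : V) r).image continuous_subtype_val).totallyBounded

section Koopman

variable {X E : Type*} [TopologicalSpace X]

theorem isometry_compContinuous_of_surjective [PseudoMetricSpace E] {Y : Type*}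
    [TopologicalSpace Y] {T : C(X, Y)} (hT : Function.Surjective T) :
    Isometry fun f : Y →ᵇ E => f.compContinuous T := by
  refine Isometry.of_dist_eq fun f g => ?_
  simp only [BoundedContinuousFunction.dist_eq_iSup,
    BoundedContinuousFunction.compContinuous_apply]
  exact hT.iSup_comp fun y => dist (f y) (g y)

theorem iterate_compContinuous_apply [PseudoMetricSpace E] (T : C(X, X)) (f : X →ᵇ E) (n : ℕ)
    (x : X) : (fun g : X →ᵇ E => g.compContinuous T)^[n] f x = f (T^[n] x) := by
  induction n generalizing f with
  | zero => rfl
  | succ n ih =>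
    rw [Function.iterate_succ_apply, ih, Function.iterate_succ_apply',
      BoundedContinuousFunction.compContinuous_apply]

variable {𝕜 : Type*} [NontriviallyNormedField 𝕜] [LocallyCompactSpace 𝕜]
  [NormedAddCommGroup E] [NormedSpace 𝕜 E] {T : C(X, X)}
  {V : Submodule 𝕜 (X →ᵇ E)} [FiniteDimensional 𝕜 V]

theorem mapClusterPt_iterate_compContinuous (hT : Function.Surjective T)
    (hV : ∀ f ∈ V, f.compContinuous T ∈ V) {f : X →ᵇ E} (hf : f ∈ V) :
    MapClusterPt f atTop fun n : ℕ => (fun g : X →ᵇ E => g.compContinuous T)^[n] f := by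
  refine mapClusterPt_iterate_of_isometry (isometry_compContinuous_of_surjective hT) <|
    (totallyBounded_inter_closedBall_of_finiteDimensional V ‖f‖).subset ?_
  rintro _ ⟨n, rfl⟩
  refine ⟨Set.MapsTo.iterate hV n hf, mem_closedBall_zero_iff.2 ?_⟩
  refine (BoundedContinuousFunction.norm_le (norm_nonneg f)).2 fun x => ?_
  rw [iterate_compContinuous_apply]
  exact f.norm_coe_le_norm _

theorem eq_of_mem_basinOfAttraction (hT : Function.Surjective T)
    (hV : ∀ f ∈ V, f.compContinuous T ∈ V) {f : X →ᵇ E} (hf : f ∈ V) {p A : X}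
    (hp : p ∈ basinOfAttraction T A) : f p = f A := by
  have hcluster : MapClusterPt (f p) atTop fun n : ℕ => f (T^[n] p) := by
    simpa only [Function.comp_def, iterate_compContinuous_apply] using
      (mapClusterPt_iterate_compContinuous hT hV hf).continuousAt_comp
        (continuous_eval_const p).continuousAt
  have hlim : Tendsto (fun n : ℕ => f (T^[n] p)) atTop (𝓝 (f A)) :=
    (f.continuous.tendsto A).comp hp
  have : (𝓝 (f p) ⊓ 𝓝 (f A)).NeBot := ClusterPt.mono hcluster hlim
  exact eq_of_nhds_neBot this

theorem eq_of_mem_closure_basinOfAttraction (hT : Function.Surjective T)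
    (hV : ∀ f ∈ V, f.compContinuous T ∈ V) {f : X →ᵇ E} (hf : f ∈ V) {p A : X}
    (hp : p ∈ closure (basinOfAttraction T A)) : f p = f A :=
  closure_minimal (fun _ hx => eq_of_mem_basinOfAttraction hT hV hf hx)
    (isClosed_eq f.continuous continuous_const) hp

end Koopman

section DistinctTriples

variable (h : UnitAddCircle ≃ₜ UnitAddCircle)

theorem tripleMap_surjective : Function.Surjective (tripleMap h) := fun p =>
  ⟨tripleMap h.symm p, Subtype.ext <| by simp [tripleMap]⟩

theorem coe_iterate_tripleMap (n : ℕ) (p : distinctTriples) :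
    ((tripleMap h)^[n] p : UnitAddCircle × UnitAddCircle × UnitAddCircle) =
      (h^[n] p.1.1, h^[n] p.1.2.1, h^[n] p.1.2.2) := by
  induction n generalizing p with
  | zero => rfl
  | succ _ ih => exact ih (tripleMap h p)

theorem mem_basinOfAttraction_tripleMap {p A : distinctTriples} :
    p ∈ basinOfAttraction (tripleMap h) A ↔
      p.1.1 ∈ basinOfAttraction h A.1.1 ∧ p.1.2.1 ∈ basinOfAttraction h A.1.2.1 ∧
        p.1.2.2 ∈ basinOfAttraction h A.1.2.2 := by
  simp only [basinOfAttraction, Set.mem_ofPred_eq, tendsto_subtype_rng, coe_iterate_tripleMap,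
    Prod.tendsto_iff]

theorem image_coe_basinOfAttraction_tripleMap (A : distinctTriples) :
    (↑) '' basinOfAttraction (tripleMap h) A =
      basinOfAttraction h A.1.1 ×ˢ basinOfAttraction h A.1.2.1 ×ˢ
        basinOfAttraction h A.1.2.2 := by
  ext ⟨x, y, z⟩
  constructor
  · rintro ⟨p, hp, hxyz⟩
    exact hxyz ▸ (mem_basinOfAttraction_tripleMap h).1 hp
  · rintro ⟨hx, hy, hz⟩
    have hdistinct : (x, y, z) ∈ distinctTriples :=
      ⟨(disjoint_basinOfAttraction h A.2.1).ne_of_mem hx hy,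
        (disjoint_basinOfAttraction h A.2.2.1).ne_of_mem hx hz,
        (disjoint_basinOfAttraction h A.2.2.2).ne_of_mem hy hz⟩
    exact ⟨⟨_, hdistinct⟩, (mem_basinOfAttraction_tripleMap h).2 ⟨hx, hy, hz⟩, rfl⟩

theorem mem_closure_basinOfAttraction_tripleMap {p A : distinctTriples} :
    p ∈ closure (basinOfAttraction (tripleMap h) A) ↔
      p.1.1 ∈ closure (basinOfAttraction h A.1.1) ∧
        p.1.2.1 ∈ closure (basinOfAttraction h A.1.2.1) ∧
          p.1.2.2 ∈ closure (basinOfAttraction h A.1.2.2) := by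
  simp only [closure_subtype, image_coe_basinOfAttraction_tripleMap, closure_prod_eq,
    Set.mem_prod]

end DistinctTriples

theorem constant_on_affected_regions_general {𝕜 E : Type*} [NontriviallyNormedField 𝕜]
    [LocallyCompactSpace 𝕜] [NormedAddCommGroup E] [NormedSpace 𝕜 E]
    (h : UnitAddCircle ≃ₜ UnitAddCircle)
    (I : Fin 3 → Set UnitAddCircle) (a : Fin 3 → UnitAddCircle) (ha : Function.Injective a)
    (hI : ∀ j, I j ⊆ closure (basinOfAttraction h (a j)))
    (V : Submodule 𝕜 (distinctTriples →ᵇ E)) [FiniteDimensional 𝕜 V]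
    (hinv : ∀ f ∈ V, f.compContinuous (tripleMap h) ∈ V) :
    ∀ f ∈ V, ∀ p q : distinctTriples,
      p.1.1 ∈ I 0 → p.1.2.1 ∈ I 1 → p.1.2.2 ∈ I 2 →
      q.1.1 ∈ I 0 → q.1.2.1 ∈ I 1 → q.1.2.2 ∈ I 2 →
      f p = f q := by
  intro f hf p q hp₀ hp₁ hp₂ hq₀ hq₁ hq₂
  let A : distinctTriples :=
    ⟨(a 0, a 1, a 2), ha.ne (by decide), ha.ne (by decide), ha.ne (by decide)⟩
  have eq_limit {r : distinctTriples} (hr₀ : r.1.1 ∈ I 0) (hr₁ : r.1.2.1 ∈ I 1)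
      (hr₂ : r.1.2.2 ∈ I 2) : f r = f A :=
    eq_of_mem_closure_basinOfAttraction (tripleMap_surjective h) hinv hf <|
      (mem_closure_basinOfAttraction_tripleMap h).2 ⟨hI 0 hr₀, hI 1 hr₁, hI 2 hr₂⟩
  exact (eq_limit hp₀ hp₁ hp₂).trans (eq_limit hq₀ hq₁ hq₂).symm

/-- Lemma 3.3 ("constant on affected regions"), in terms of circle dynamics: if `I₁, I₂, I₃`
are pairwise disjoint closed subsets of the circle, each the closure of its nonempty
interior, and the iterates of a circle homeomorphism `h` converge on the interior of each
`I_j` to a point `a_j ∈ I_j`, then every element of a finite-dimensional subspace of the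
bounded continuous functions on the space of distinct triples that is invariant under
precomposition with `h × h × h` is constant on `I₁ × I₂ × I₃`. -/
theorem constant_on_affected_regions (h : UnitAddCircle ≃ₜ UnitAddCircle)
    (I : Fin 3 → Set UnitAddCircle)
    (hclosed : ∀ j, IsClosed (I j))
    (hdisj : ∀ j k, j ≠ k → Disjoint (I j) (I k))
    (hint : ∀ j, (interior (I j)).Nonempty)
    (hreg : ∀ j, I j = closure (interior (I j)))
    (a : Fin 3 → UnitAddCircle) (ha : ∀ j, a j ∈ I j)
    (hconv : ∀ j, ∀ ξ ∈ interior (I j),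
      Tendsto (fun n : ℕ => (⇑h)^[n] ξ) atTop (𝓝 (a j)))
    (V : Submodule ℝ (BoundedContinuousFunction (↥distinctTriples) ℝ))
    (hfd : FiniteDimensional ℝ V)
    (hinv : ∀ f ∈ V, f.compContinuous (tripleMap h) ∈ V) :
    ∀ f ∈ V, ∀ p q : ↥distinctTriples,
      p.1.1 ∈ I 0 → p.1.2.1 ∈ I 1 → p.1.2.2 ∈ I 2 →
      q.1.1 ∈ I 0 → q.1.2.1 ∈ I 1 → q.1.2.2 ∈ I 2 →
      f p = f q :=
  constant_on_affected_regions_general h I a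
    (fun j k hjk => by_contra fun hne => (hdisj j k hne).ne_of_mem (ha j) (ha k) hjk)
    (fun j => (hreg j).trans_subset (closure_mono (hconv j))) V hinv
end

section
/- Let Γ be a group acting on a compact metrizable space X (with Borel probability measure μ) by homeomorphisms, let ρ : Γ → Γ be a group automorphism, and let T : X → X be a homeomorphism satisfying T(γ·x) = ρ(γ)·T(x) for all γ ∈ Γ and x ∈ X. Let f : X³ → ℝ be bounded, measurable, invariant under the diagonal Γ-action, and a cocycle. Define g : X³ → ℝ by g(y₀,y₁,y₂) = f(T⁻¹(y₀), T⁻¹(y₁), T⁻¹(y₂)). Then: (i) g is bounded, measurable, invariant under the diagonal Γ-action, and a cocycle; and (ii) there exists a bounded function β : Γ² → ℝ with β(γγ₀, γγ₁) = β(γ₀,γ₁) for all γ, γ₀, γ₁ ∈ Γ such that ψ(f)(ρ⁻¹(γ₀), ρ⁻¹(γ₁), ρ⁻¹(γ₂)) − ψ(g)(γ₀,γ₁,γ₂) = δβ(γ₀,γ₁,γ₂) for all γ₀,γ₁,γ₂ ∈ Γ. (This is the content of Lemma 3.1, describing the action of a mapping class on CH²_b(Γ): the class obtained by twisting ψ(f)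 by the automorphism ρ induced by a diffeomorphism is represented by the push-forward of f under the induced boundary homeomorphism T.) -/
open MeasureTheory

/-- The averaging map `ψ` sending a bounded measurable function on `X³` to a cochain on
`Γ³`: `ψ(f)(γ₀,γ₁,γ₂) = ∫_{X³} f(γ₀·x₀, γ₁·x₁, γ₂·x₂) dμ³`. -/
noncomputable def psi {Γ X : Type*} [MeasurableSpace X] (μ : Measure X)
    (ρ : Γ → X → X) (f : X → X → X → ℝ) (γ₀ γ₁ γ₂ : Γ) : ℝ :=
  ∫ p : X × X × X, f (ρ γ₀ p.1) (ρ γ₁ p.2.1) (ρ γ₂ p.2.2) ∂(μ.prod (μ.prod μ))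

/-!
The integral of a bounded cocycle `f` against product measures is a cocycle on the set of
probability measures on `X`, and `ψ(f)` is its restriction to the orbit of `μ` under push-forward.
Since `T` is equivariant, `ψ(g)` is, up to the twist by `ρ`, the restriction of the same cocycle to
the orbit of `T⁻¹_* μ`. Two maps into a set carrying a cocycle pull it back to cohomologous
cocycles, by the prism homotopy; for two orbit maps the resulting primitive is bounded and
invariant.
-/

section Cocycle

variable {ι S A : Type*}

/-- Homogeneous 2-cocycles on a set `S`, taken without any boundedness or invariance. -/
def IsTwoCocycle [AddCommGroup A] (c : S → S → S → A) : Prop :=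
  ∀ x₀ x₁ x₂ x₃, c x₁ x₂ x₃ - c x₀ x₂ x₃ + c x₀ x₁ x₃ - c x₀ x₁ x₂ = 0

/-- The prism operator on 2-cochains: the chain homotopy between the pull-backs along `p` and `q`,
coming from the triangulation of a prism over an edge. Its sign is chosen so that its coboundary on
a cocycle is the pull-back along `p` minus the pull-back along `q`. -/
def prism [AddCommGroup A] (c : S → S → S → A) (p q : ι → S) (i j : ι) : A :=
  c (p i) (p j) (q j) - c (p i) (q i) (q j)

theorem IsTwoCocycle.sub_eq_coboundary_prism [AddCommGroup A] {c : S → S → S → A}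
    (hc : IsTwoCocycle c) (p q : ι → S) (i j k : ι) :
    c (p i) (p j) (p k) - c (q i) (q j) (q k) =
      prism c p q j k - prism c p q i k + prism c p q i j := by
  have upper := hc (p i) (p j) (p k) (q k)
  have middle := hc (p i) (p j) (q j) (q k)
  have lower := hc (p i) (q i) (q j) (q k)
  simp only [prism]
  linear_combination (norm := abel) middle - upper - lower

theorem norm_prism_le [SeminormedAddCommGroup A] {c : S → S → S → A} {C : ℝ}
    (hC : ∀ x y z, ‖c x y z‖ ≤ C) (p q : ι → S) (i j : ι) : ‖prism c p q i j‖ ≤ C + C :=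
  norm_sub_le_of_le (hC _ _ _) (hC _ _ _)

end Cocycle

section TripleIntegral

variable {X Y E : Type*} [MeasurableSpace X] [MeasurableSpace Y]
  [NormedAddCommGroup E] [NormedSpace ℝ E]

theorem integral_comp_of_measurePreserving {μ : Measure X} {ν : Measure Y} {φ : X → Y}
    (hφ : MeasurePreserving φ μ ν) {F : Y → E} (hF : AEStronglyMeasurable F ν) :
    ∫ x, F (φ x) ∂μ = ∫ y, F y ∂ν := by
  rw [← hφ.map_eq] at hF ⊢
  exact (integral_map hφ.aemeasurable hF).symm

/-- The integral of `f` against a product of three probability measures, seen as a 2-cochain on the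
set of probability measures on `X`. -/
noncomputable def tripleIntegral (f : X → X → X → E) (μ₀ μ₁ μ₂ : ProbabilityMeasure X) : E :=
  ∫ p : X × X × X, f p.1 p.2.1 p.2.2 ∂((μ₀ : Measure X).prod ((μ₁ : Measure X).prod μ₂))

theorem norm_tripleIntegral_le {f : X → X → X → E} {C : ℝ} (hC : ∀ x y z, ‖f x y z‖ ≤ C)
    (μ₀ μ₁ μ₂ : ProbabilityMeasure X) : ‖tripleIntegral f μ₀ μ₁ μ₂‖ ≤ C := by
  simpa [tripleIntegral] using norm_integral_le_of_norm_le_const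
    (μ := (μ₀ : Measure X).prod ((μ₁ : Measure X).prod μ₂)) (.of_forall fun p => hC p.1 p.2.1 p.2.2)

theorem tripleIntegral_map {f : X → X → X → E}
    (hf : StronglyMeasurable fun p : X × X × X => f p.1 p.2.1 p.2.2)
    {h₀ h₁ h₂ : Y → X} (hh₀ : Measurable h₀) (hh₁ : Measurable h₁) (hh₂ : Measurable h₂)
    (μ₀ μ₁ μ₂ : ProbabilityMeasure Y) :
    tripleIntegral f (μ₀.map hh₀.aemeasurable) (μ₁.map hh₁.aemeasurable)
        (μ₂.map hh₂.aemeasurable) =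
      tripleIntegral (fun x y z => f (h₀ x) (h₁ y) (h₂ z)) μ₀ μ₁ μ₂ :=
  (integral_comp_of_measurePreserving ((hh₀.measurePreserving (μ₀ : Measure Y)).prod
    ((hh₁.measurePreserving (μ₁ : Measure Y)).prod (hh₂.measurePreserving (μ₂ : Measure Y))))
    hf.aestronglyMeasurable).symm

/-- The cocycle identity of `f`, integrated over `X⁴`. -/
theorem isTwoCocycle_tripleIntegral {f : X → X → X → E} (hf : IsTwoCocycle f)
    (hmeas : StronglyMeasurable fun p : X × X × X => f p.1 p.2.1 p.2.2)
    {C : ℝ} (hC : ∀ x y z, ‖f x y z‖ ≤ C) : IsTwoCocycle (tripleIntegral f) := by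
  intro μ₀ μ₁ μ₂ μ₃
  let F : X × X × X → E := fun p => f p.1 p.2.1 p.2.2
  let P : Measure (X × X × X × X) :=
    (μ₀ : Measure X).prod ((μ₁ : Measure X).prod ((μ₂ : Measure X).prod μ₃))
  have face {φ : X × X × X × X → X × X × X} {ν₀ ν₁ ν₂ : ProbabilityMeasure X}
      (hφ : MeasurePreserving φ P ((ν₀ : Measure X).prod ((ν₁ : Measure X).prod ν₂))) :
      Integrable (fun x => F (φ x)) P ∧ tripleIntegral f ν₀ ν₁ ν₂ = ∫ x, F (φ x) ∂P :=
    ⟨.of_bound (hmeas.comp_measurable hφ.measurable).aestronglyMeasurable C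
        (.of_forall fun _ => hC _ _ _),
      (integral_comp_of_measurePreserving hφ hmeas.aestronglyMeasurable).symm⟩
  have id₀ := MeasurePreserving.id (μ₀ : Measure X)
  have id₁ := MeasurePreserving.id (μ₁ : Measure X)
  obtain ⟨i₀, e₀⟩ := face (ν₀ := μ₁) (ν₁ := μ₂) (ν₂ := μ₃) measurePreserving_snd
  obtain ⟨i₁, e₁⟩ := face (ν₀ := μ₀) (ν₁ := μ₂) (ν₂ := μ₃) (id₀.prod measurePreserving_snd)
  obtain ⟨i₂, e₂⟩ := face (ν₀ := μ₀) (ν₁ := μ₁) (ν₂ := μ₃)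
    (id₀.prod (id₁.prod measurePreserving_snd))
  obtain ⟨i₃, e₃⟩ := face (ν₀ := μ₀) (ν₁ := μ₁) (ν₂ := μ₂)
    (id₀.prod (id₁.prod measurePreserving_fst))
  rw [e₀, e₁, e₂, e₃, ← integral_sub' i₀ i₁, ← integral_add' (i₀.sub i₁) i₂,
    ← integral_sub' ((i₀.sub i₁).add i₂) i₃]
  exact integral_eq_zero_of_ae (.of_forall fun x => hf x.1 x.2.1 x.2.2.1 x.2.2.2)

end TripleIntegral

section Averaging

variable {Γ Δ X Y : Type*} [MeasurableSpace X] [MeasurableSpace Y]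
  {σ : Γ → X → X} {f : X → X → X → ℝ}

theorem psi_eq_tripleIntegral_map (hσ : ∀ γ, Measurable (σ γ))
    (hmeas : Measurable fun p : X × X × X => f p.1 p.2.1 p.2.2)
    (μ : ProbabilityMeasure X) (γ₀ γ₁ γ₂ : Γ) :
    psi μ σ f γ₀ γ₁ γ₂ = tripleIntegral f (μ.map (hσ γ₀).aemeasurable)
      (μ.map (hσ γ₁).aemeasurable) (μ.map (hσ γ₂).aemeasurable) :=
  (tripleIntegral_map hmeas.stronglyMeasurable (hσ γ₀) (hσ γ₁) (hσ γ₂) μ μ μ).symm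

theorem psi_comp_of_equivariant (hσ : ∀ γ, Measurable (σ γ))
    (hmeas : Measurable fun p : X × X × X => f p.1 p.2.1 p.2.2)
    {τ : Δ → Y → Y} {θ : Δ → Γ} {S : Y → X} (hS : Measurable S)
    (hequiv : ∀ δ y, S (τ δ y) = σ (θ δ) (S y)) (ν : ProbabilityMeasure Y) (δ₀ δ₁ δ₂ : Δ) :
    psi ν τ (fun y₀ y₁ y₂ => f (S y₀) (S y₁) (S y₂)) δ₀ δ₁ δ₂ =
      psi (ν.map hS.aemeasurable) σ f (θ δ₀) (θ δ₁) (θ δ₂) := by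
  have hmeas_translate : Measurable fun p : X × X × X =>
      f (σ (θ δ₀) p.1) (σ (θ δ₁) p.2.1) (σ (θ δ₂) p.2.2) :=
    hmeas.comp ((hσ _).prodMap ((hσ _).prodMap (hσ _)))
  simp only [psi, hequiv]
  exact (tripleIntegral_map (f := fun x y z => f (σ (θ δ₀) x) (σ (θ δ₁) y) (σ (θ δ₂) z))
    hmeas_translate.stronglyMeasurable hS hS hS ν ν ν).symm

theorem tripleIntegral_map_mul_left [Mul Γ] (hσ : ∀ γ, Measurable (σ γ))
    (hσmul : ∀ γ γ' x, σ (γ * γ') x = σ γ (σ γ' x))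
    (hmeas : Measurable fun p : X × X × X => f p.1 p.2.1 p.2.2)
    (hinv : ∀ γ x y z, f (σ γ x) (σ γ y) (σ γ z) = f x y z)
    (μ₀ μ₁ μ₂ : ProbabilityMeasure X) (γ γ₀ γ₁ γ₂ : Γ) :
    tripleIntegral f (μ₀.map (hσ (γ * γ₀)).aemeasurable) (μ₁.map (hσ (γ * γ₁)).aemeasurable)
        (μ₂.map (hσ (γ * γ₂)).aemeasurable) =
      tripleIntegral f (μ₀.map (hσ γ₀).aemeasurable) (μ₁.map (hσ γ₁).aemeasurable)
        (μ₂.map (hσ γ₂).aemeasurable) := by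
  simp only [tripleIntegral_map hmeas.stronglyMeasurable (hσ _) (hσ _) (hσ _), hσmul, hinv]

theorem exists_bounded_invariant_psi_sub_psi_eq_coboundary [Mul Γ] (hσ : ∀ γ, Measurable (σ γ))
    (hσmul : ∀ γ γ' x, σ (γ * γ') x = σ γ (σ γ' x))
    (hbdd : ∃ C, ∀ x y z, |f x y z| ≤ C)
    (hmeas : Measurable fun p : X × X × X => f p.1 p.2.1 p.2.2)
    (hinv : ∀ γ x y z, f (σ γ x) (σ γ y) (σ γ z) = f x y z) (hcoc : IsTwoCocycle f)
    (μ ν : ProbabilityMeasure X) :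
    ∃ β : Γ → Γ → ℝ,
      (∃ C, ∀ γ₀ γ₁, |β γ₀ γ₁| ≤ C) ∧
      (∀ γ γ₀ γ₁, β (γ * γ₀) (γ * γ₁) = β γ₀ γ₁) ∧
      ∀ γ₀ γ₁ γ₂, psi μ σ f γ₀ γ₁ γ₂ - psi ν σ f γ₀ γ₁ γ₂ = β γ₁ γ₂ - β γ₀ γ₂ + β γ₀ γ₁ := by
  obtain ⟨C, hC⟩ := hbdd
  let orbit (m : ProbabilityMeasure X) (γ : Γ) : ProbabilityMeasure X := m.map (hσ γ).aemeasurable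
  refine ⟨prism (tripleIntegral f) (orbit μ) (orbit ν),
    ⟨C + C, fun _ _ => norm_prism_le (c := tripleIntegral f) (norm_tripleIntegral_le hC) _ _ _ _⟩,
    fun γ γ₀ γ₁ => ?_, fun γ₀ γ₁ γ₂ => ?_⟩
  · simp only [prism, orbit, tripleIntegral_map_mul_left hσ hσmul hmeas hinv]
  · rw [psi_eq_tripleIntegral_map hσ hmeas, psi_eq_tripleIntegral_map hσ hmeas]
    exact (isTwoCocycle_tripleIntegral hcoc hmeas.stronglyMeasurable hC).sub_eq_coboundary_prism
      (orbit μ) (orbit ν) γ₀ γ₁ γ₂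

/-- Here `S : Y → X` and `θ : Δ → Γ` play the roles of `T⁻¹` and `ρ⁻¹`. -/
theorem mcg_action_on_boundary_cocycles_general [Mul Γ] [Mul Δ]
    (μ : Measure X) [IsProbabilityMeasure μ] (ν : Measure Y) [IsProbabilityMeasure ν]
    (hσ : ∀ γ, Measurable (σ γ)) (hσmul : ∀ γ γ' x, σ (γ * γ') x = σ γ (σ γ' x))
    {τ : Δ → Y → Y} (θ : Δ →ₙ* Γ) {S : Y → X} (hS : Measurable S)
    (hequiv : ∀ δ y, S (τ δ y) = σ (θ δ) (S y))
    (hbdd : ∃ C, ∀ x y z, |f x y z| ≤ C)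
    (hmeas : Measurable fun p : X × X × X => f p.1 p.2.1 p.2.2)
    (hinv : ∀ γ x y z, f (σ γ x) (σ γ y) (σ γ z) = f x y z) (hcoc : IsTwoCocycle f)
    {g : Y → Y → Y → ℝ} (hg : ∀ y₀ y₁ y₂, g y₀ y₁ y₂ = f (S y₀) (S y₁) (S y₂)) :
    (∃ C, ∀ x y z, |g x y z| ≤ C) ∧
    (Measurable fun p : Y × Y × Y => g p.1 p.2.1 p.2.2) ∧
    (∀ δ x y z, g (τ δ x) (τ δ y) (τ δ z) = g x y z) ∧
    IsTwoCocycle g ∧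
    ∃ β : Δ → Δ → ℝ,
      (∃ C, ∀ δ₀ δ₁, |β δ₀ δ₁| ≤ C) ∧
      (∀ δ δ₀ δ₁, β (δ * δ₀) (δ * δ₁) = β δ₀ δ₁) ∧
      ∀ δ₀ δ₁ δ₂, psi μ σ f (θ δ₀) (θ δ₁) (θ δ₂) - psi ν τ g δ₀ δ₁ δ₂ =
        β δ₁ δ₂ - β δ₀ δ₂ + β δ₀ δ₁ := by
  obtain rfl : g = fun y₀ y₁ y₂ => f (S y₀) (S y₁) (S y₂) := by
    funext y₀ y₁ y₂
    exact hg y₀ y₁ y₂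
  let ν' : ProbabilityMeasure Y := ⟨ν, inferInstance⟩
  obtain ⟨β, ⟨D, hD⟩, hβinv, hβ⟩ := exists_bounded_invariant_psi_sub_psi_eq_coboundary
    hσ hσmul hbdd hmeas hinv hcoc ⟨μ, inferInstance⟩ (ν'.map hS.aemeasurable)
  refine ⟨hbdd.imp fun C hC _ _ _ => hC _ _ _, hmeas.comp (hS.prodMap (hS.prodMap hS)),
    fun δ x y z => by simp only [hequiv, hinv], fun _ _ _ _ => hcoc _ _ _ _,
    fun δ₀ δ₁ => β (θ δ₀) (θ δ₁), ⟨D, fun _ _ => hD _ _⟩,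
    fun δ δ₀ δ₁ => by simp only [map_mul, hβinv], fun δ₀ δ₁ δ₂ => ?_⟩
  exact (congrArg _ (psi_comp_of_equivariant hσ hmeas hS hequiv ν' δ₀ δ₁ δ₂)).trans (hβ _ _ _)

end Averaging

/-- Lemma 3.1: given an action `σ` of `Γ` by homeomorphisms on a compact metrizable
probability space, a group automorphism `ρ` of `Γ` and a homeomorphism `T` with
`T(γ·x) = ρ(γ)·T(x)`, the push-forward `g = f ∘ (T⁻¹)³` of an invariant bounded measurable
cocycle `f` is again an invariant bounded measurable cocycle, and the twisted cochain
`ψ(f)(ρ⁻¹γ₀, ρ⁻¹γ₁, ρ⁻¹γ₂)` differs from `ψ(g)(γ₀,γ₁,γ₂)` by the coboundary of a bounded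
invariant `β : Γ² → ℝ`. -/
theorem mcg_action_on_boundary_cocycles {Γ X : Type*} [Group Γ] [TopologicalSpace X]
    [CompactSpace X] [TopologicalSpace.MetrizableSpace X] [MeasurableSpace X] [BorelSpace X]
    (μ : Measure X) [IsProbabilityMeasure μ]
    (σ : Γ → X ≃ₜ X)
    (hσmul : ∀ γ γ' : Γ, ∀ x, σ (γ * γ') x = σ γ (σ γ' x)) (hσone : ∀ x, σ 1 x = x)
    (ρ : Γ ≃* Γ)
    (T : X ≃ₜ X) (hT : ∀ γ x, T (σ γ x) = σ (ρ γ) (T x))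
    (f : X → X → X → ℝ)
    (hbdd : ∃ C, ∀ x y z, |f x y z| ≤ C)
    (hmeas : Measurable fun p : X × X × X => f p.1 p.2.1 p.2.2)
    (hinvf : ∀ γ x y z, f (σ γ x) (σ γ y) (σ γ z) = f x y z)
    (hcoc : ∀ x₀ x₁ x₂ x₃, f x₁ x₂ x₃ - f x₀ x₂ x₃ + f x₀ x₁ x₃ - f x₀ x₁ x₂ = 0)
    (g : X → X → X → ℝ)
    (hg : ∀ y₀ y₁ y₂, g y₀ y₁ y₂ = f (T.symm y₀) (T.symm y₁) (T.symm y₂)) :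
    (∃ C, ∀ x y z, |g x y z| ≤ C) ∧
    (Measurable fun p : X × X × X => g p.1 p.2.1 p.2.2) ∧
    (∀ γ x y z, g (σ γ x) (σ γ y) (σ γ z) = g x y z) ∧
    (∀ x₀ x₁ x₂ x₃, g x₁ x₂ x₃ - g x₀ x₂ x₃ + g x₀ x₁ x₃ - g x₀ x₁ x₂ = 0) ∧
    ∃ β : Γ → Γ → ℝ,
      (∃ C, ∀ γ₀ γ₁, |β γ₀ γ₁| ≤ C) ∧
      (∀ γ γ₀ γ₁ : Γ, β (γ * γ₀) (γ * γ₁) = β γ₀ γ₁) ∧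
      (∀ γ₀ γ₁ γ₂ : Γ,
        psi μ (fun γ x => σ γ x) f (ρ.symm γ₀) (ρ.symm γ₁) (ρ.symm γ₂) -
          psi μ (fun γ x => σ γ x) g γ₀ γ₁ γ₂ =
          β γ₁ γ₂ - β γ₀ γ₂ + β γ₀ γ₁) := by
  exact mcg_action_on_boundary_cocycles_general μ μ (fun γ => (σ γ).measurable) hσmul
    (ρ.symm : Γ →ₙ* Γ) T.symm.measurable
    (fun γ y => T.injective (by simp [hT])) hbdd hmeas hinvf hcoc hg
end
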